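/- arXiv:1008.1124 — 6 statements merged into one kernel-verified Lean document; each statement's English description precedes it below -/
import Mathlib

section
/- Let γ : ℝ × ℝ³ → ℝ³ and P : ℝ × ℝ³ → ℝ be smooth, suppose that for every time t the map γ(t,·) : ℝ³ → ℝ³ is a diffeomorphism, and suppose (γ,P) solves system (N). Define, for (t,x) ∈ ℝ × ℝ³, u(t,x) = (∂γ/∂t)(t, γ(t,·)⁻¹(x)), B(t,x) = (∂γ/∂ξ¹)(t, γ(t,·)⁻¹(x)), and p(t,x) = P(t, γ(t,·)⁻¹(x)) − ½|B(t,x)|². Then (u, B, p) with constant density ρ = 1 solves the incompressible ideal MHD equations: div u = 0, u_t + (u·∇)u + B × curl B + ∇p = 0, B_t = curl(u × B), div B = 0. -/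
open Matrix

noncomputable section

abbrev V3 := Fin 3 → ℝ

/-- Partial derivative of `f : ℝ³ → E` with respect to the `i`-th coordinate. -/
noncomputable def pdx {E : Type*} [NormedAddCommGroup E] [NormedSpace ℝ E]
    (i : Fin 3) (f : V3 → E) (x : V3) : E :=
  deriv (fun s => f (Function.update x i s)) (x i)

/-- Spatial divergence of a vector field on `ℝ³`. -/
noncomputable def divV (v : V3 → V3) (x : V3) : ℝ :=
  ∑ i, pdx i v x i

/-- Spatial gradient of a scalar field on `ℝ³`. -/
noncomputable def gradV (f : V3 → ℝ) (x : V3) : V3 :=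
  fun i => pdx i f x

/-- Spatial curl of a vector field on `ℝ³`. -/
noncomputable def curlV (v : V3 → V3) (x : V3) : V3 :=
  ![pdx 1 v x 2 - pdx 2 v x 1,
    pdx 2 v x 0 - pdx 0 v x 2,
    pdx 0 v x 1 - pdx 1 v x 0]

/-- Convective derivative `(u·∇)v` of a vector field on `ℝ³`. -/
noncomputable def advectV (u v : V3 → V3) (x : V3) : V3 :=
  fun i => ∑ j, u x j * pdx j v x i

/-- System (N): the incompressible MHD equations in natural curvilinear coordinates,
for `γ : ℝ × ℝ³ → ℝ³` (curried, the spatial argument is `ξ = (ξ¹,ξ²,ξ³)`) and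
`P : ℝ × ℝ³ → ℝ`. -/
def SystemN (γ : ℝ → V3 → V3) (P : ℝ → V3 → ℝ) : Prop :=
  (∀ (t : ℝ) (ξ : V3),
      deriv (fun s => deriv (fun s' => γ s' ξ) s) t
          - pdx 0 (fun y => pdx 0 (γ t) y) ξ
          + pdx 0 (P t) ξ • crossProduct (pdx 1 (γ t) ξ) (pdx 2 (γ t) ξ)
          + pdx 1 (P t) ξ • crossProduct (pdx 2 (γ t) ξ) (pdx 0 (γ t) ξ)
          + pdx 2 (P t) ξ • crossProduct (pdx 0 (γ t) ξ) (pdx 1 (γ t) ξ) = 0)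
    ∧ (∀ (t : ℝ) (ξ : V3), (Matrix.of fun i j => pdx j (γ t) ξ i).det = 1)

/-- Coordinate direction in spacetime. -/
def exd (i : Fin 3) : ℝ × V3 := (0, Pi.single i 1)

/-- Time direction in spacetime. -/
def etd : ℝ × V3 := (1, 0)

theorem pdx_of_has {E : Type*} [NormedAddCommGroup E] [NormedSpace ℝ E]
    {F : ℝ × V3 → E} {F' : ℝ × V3 →L[ℝ] E} {t : ℝ} {x : V3} (i : Fin 3)
    (h : HasFDerivAt F F' (t, x)) : pdx i (fun y => F (t, y)) x = F' (exd i) := by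
  unfold pdx
  have h1 : HasDerivAt (fun s : ℝ => ((t, Function.update x i s) : ℝ × V3)) (exd i) (x i) := by
    exact (hasDerivAt_const (x i) t).prodMk (hasDerivAt_update x i (x i))
  have h2 : HasFDerivAt F F' (t, Function.update x i (x i)) := by simpa using h
  exact (h2.comp_hasDerivAt (x i) h1).deriv

theorem dt_of_has {E : Type*} [NormedAddCommGroup E] [NormedSpace ℝ E]
    {F : ℝ × V3 → E} {F' : ℝ × V3 →L[ℝ] E} {t : ℝ} {x : V3}
    (h : HasFDerivAt F F' (t, x)) : deriv (fun s => F (s, x)) t = F' etd := by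
  have h1 : HasDerivAt (fun s : ℝ => ((s, x) : ℝ × V3)) etd t :=
    (hasDerivAt_id t).prodMk (hasDerivAt_const t x)
  exact (h.comp_hasDerivAt t h1).deriv

theorem lin_expand {E : Type*} [NormedAddCommGroup E] [NormedSpace ℝ E]
    (L : ℝ × V3 →L[ℝ] E) (a : ℝ) (v : V3) :
    L (a, v) = a • L etd + v 0 • L (exd 0) + v 1 • L (exd 1) + v 2 • L (exd 2) := by
  rw [← map_smul, ← map_smul, ← map_smul, ← map_smul, ← map_add, ← map_add, ← map_add]
  congr 1
  ext i
  · simp [etd, exd]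
  · fin_cases i <;> simp [etd, exd]

theorem symm_dir {G : ℝ × V3 → V3} (hG : ContDiff ℝ (⊤ : ℕ∞) G) (q v w : ℝ × V3) :
    fderiv ℝ (fun q => fderiv ℝ G q v) q w = fderiv ℝ (fun q => fderiv ℝ G q w) q v := by
  have hd : Differentiable ℝ (fderiv ℝ G) :=
    (hG.fderiv_right (m := (⊤ : ℕ∞)) (by simp)).differentiable (by simp)
  have key : ∀ a b, fderiv ℝ (fun q => fderiv ℝ G q a) q b = fderiv ℝ (fderiv ℝ G) q b a := by
    intro a b
    rw [fderiv_clm_apply hd.differentiableAt (differentiableAt_const a)]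
    simp
  rw [key, key]
  have : IsSymmSndFDerivAt ℝ G q :=
    (hG.contDiffAt).isSymmSndFDerivAt (by
      simp only [minSmoothness_of_isRCLikeNormedField]
      exact WithTop.coe_le_coe.2 (le_top (a := (2 : ℕ∞))))
  exact this _ _

theorem smooth_dir {G : ℝ × V3 → V3} (hG : ContDiff ℝ (⊤ : ℕ∞) G) (v : ℝ × V3) :
    ContDiff ℝ (⊤ : ℕ∞) (fun q => fderiv ℝ G q v) :=
  (hG.fderiv_right (m := (⊤ : ℕ∞)) (by simp)).clm_apply contDiff_const

/-- Chain rule for `U (q.1, G q) = W q`. -/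
theorem chain_dir {E : Type*} [NormedAddCommGroup E] [NormedSpace ℝ E]
    {G : ℝ × V3 → V3} {U W : ℝ × V3 → E} (hG : Differentiable ℝ G)
    (hU : Differentiable ℝ U) (h : ∀ q, U (q.1, G q) = W q) (q v : ℝ × V3) :
    fderiv ℝ W q v = fderiv ℝ U (q.1, G q) (v.1, fderiv ℝ G q v) := by
  have hW : W = U ∘ (fun q => (q.1, G q)) := by funext q; exact (h q).symm
  have h1 : HasFDerivAt (fun q : ℝ × V3 => (q.1, G q))
      ((ContinuousLinearMap.fst ℝ ℝ V3).prod (fderiv ℝ G q)) q :=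
    hasFDerivAt_fst.prodMk (hG q).hasFDerivAt
  have h2 := (hU (q.1, G q)).hasFDerivAt.comp q h1
  rw [hW, h2.fderiv]
  rfl

theorem div_free {G : ℝ × V3 → V3} (hG : ContDiff ℝ (⊤ : ℕ∞) G)
    (hdet : ∀ q, (Matrix.of fun i j => fderiv ℝ G q (exd j) i).det = 1)
    {U : ℝ × V3 → V3} (hU : Differentiable ℝ U) (v : ℝ × V3)
    (h : ∀ q, U (q.1, G q) = fderiv ℝ G q v) (q : ℝ × V3) :
    ∑ i, fderiv ℝ U (q.1, G q) (exd i) i = 0 := by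
  have hpath : HasDerivAt (fun s : ℝ => q + s • v) v 0 := by
    simpa using ((hasDerivAt_id (0:ℝ)).smul_const v).const_add q
  have hA : ∀ i j, HasDerivAt (fun s : ℝ => fderiv ℝ G (q + s • v) (exd j) i)
      (fderiv ℝ G q (exd j) 0 * fderiv ℝ U (q.1, G q) (exd 0) i
        + fderiv ℝ G q (exd j) 1 * fderiv ℝ U (q.1, G q) (exd 1) i
        + fderiv ℝ G q (exd j) 2 * fderiv ℝ U (q.1, G q) (exd 2) i) 0 := by
    intro i j
    have h1 : HasFDerivAt (fun q => fderiv ℝ G q (exd j))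
        (fderiv ℝ (fun q => fderiv ℝ G q (exd j)) q) (q + (0:ℝ) • v) := by
      simpa using ((smooth_dir hG (exd j)).differentiable (by simp) q).hasFDerivAt
    have h2 := h1.comp_hasDerivAt (0:ℝ) hpath
    rw [symm_dir hG, chain_dir (hG.differentiable (by simp)) hU h q (exd j), lin_expand] at h2
    have h3 := (hasDerivAt_pi.1 h2) i
    simpa [exd] using h3
  have hd : (fun s : ℝ => (Matrix.of fun i j => fderiv ℝ G (q + s • v) (exd j) i).det)
      = fun _ => 1 := by funext s; exact hdet _
  have hq := hdet q
  simp only [Matrix.det_fin_three, Matrix.of_apply] at hd hq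
  have H := (((((((hA 0 0).mul (hA 1 1)).mul (hA 2 2)).sub
    (((hA 0 0).mul (hA 1 2)).mul (hA 2 1))).sub
    (((hA 0 1).mul (hA 1 0)).mul (hA 2 2))).add
    (((hA 0 1).mul (hA 1 2)).mul (hA 2 0))).add
    (((hA 0 2).mul (hA 1 0)).mul (hA 2 1))).sub
    (((hA 0 2).mul (hA 1 1)).mul (hA 2 0))
  have H2 : HasDerivAt (fun _ : ℝ => (1:ℝ)) _ 0 :=
    H.congr_of_eventuallyEq (Filter.Eventually.of_forall fun s => (congrFun hd s).symm)
  have H3 := H2.unique (hasDerivAt_const (0:ℝ) (1:ℝ))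
  simp only [Pi.mul_apply, zero_smul, add_zero] at H3
  rw [Fin.sum_univ_three]
  generalize fderiv ℝ G q (exd 0) = a at *
  generalize fderiv ℝ G q (exd 1) = b at *
  generalize fderiv ℝ G q (exd 2) = c at *
  linear_combination H3 - (fderiv ℝ U (q.1, G q) (exd 0) 0 + fderiv ℝ U (q.1, G q) (exd 1) 1
    + fderiv ℝ U (q.1, G q) (exd 2) 2) * hq

/-- If `(γ, P)` is a smooth solution of system (N) with each `γ(t,·)` a diffeomorphism
of `ℝ³` (with smooth inverse `η(t,·)`), then the Eulerian fields
`u(t,x) = γ_t(t, γ(t,·)⁻¹(x))`, `B(t,x) = γ_{ξ¹}(t, γ(t,·)⁻¹(x))` and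
`p = P ∘ (t, γ(t,·)⁻¹) − ½|B|²`, together with constant density `ρ = 1`, solve the
incompressible ideal MHD equations. -/
theorem naturalCoordinates_solve_MHD
    (γ η : ℝ → V3 → V3) (P : ℝ → V3 → ℝ)
    (hγ : ContDiff ℝ (⊤ : ℕ∞) (fun q : ℝ × V3 => γ q.1 q.2))
    (hP : ContDiff ℝ (⊤ : ℕ∞) (fun q : ℝ × V3 => P q.1 q.2))
    (hη : ContDiff ℝ (⊤ : ℕ∞) (fun q : ℝ × V3 => η q.1 q.2))
    (hleft : ∀ t : ℝ, Function.LeftInverse (η t) (γ t))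
    (hright : ∀ t : ℝ, Function.RightInverse (η t) (γ t))
    (hsol : SystemN γ P)
    (u B : ℝ → V3 → V3) (p : ℝ → V3 → ℝ)
    (hu : ∀ t x, u t x = deriv (fun s => γ s (η t x)) t)
    (hB : ∀ t x, B t x = pdx 0 (γ t) (η t x))
    (hp : ∀ t x, p t x = P t (η t x) - (1 / 2 : ℝ) * (B t x ⬝ᵥ B t x)) :
    (∀ t x, divV (u t) x = 0) ∧
    (∀ t x,
      deriv (fun s => u s x) t + advectV (u t) (u t) x
        + crossProduct (B t x) (curlV (B t) x) + gradV (p t) x = 0) ∧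
    (∀ t x,
      deriv (fun s => B s x) t
        = curlV (fun y => crossProduct (u t y) (B t y)) x) ∧
    (∀ t x, divV (B t) x = 0) := by
  set G : ℝ × V3 → V3 := fun q => γ q.1 q.2 with hGdef
  set E : ℝ × V3 → V3 := fun q => η q.1 q.2 with hEdef
  set Pq : ℝ × V3 → ℝ := fun q => P q.1 q.2 with hPdef
  have hGd : Differentiable ℝ G := hγ.differentiable (by simp)
  have hΨ : ContDiff ℝ (⊤ : ℕ∞) (fun q : ℝ × V3 => (q.1, E q)) := contDiff_fst.prodMk hη
  set U : ℝ × V3 → V3 := fun q => fderiv ℝ G (q.1, E q) etd with hUdef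
  set Bq : ℝ × V3 → V3 := fun q => fderiv ℝ G (q.1, E q) (exd 0) with hBdef
  set Q : ℝ × V3 → ℝ := fun q => Pq (q.1, E q) with hQdef
  have hUd : Differentiable ℝ U :=
    ((smooth_dir hγ etd).comp hΨ).differentiable (by simp)
  have hBd : Differentiable ℝ Bq :=
    ((smooth_dir hγ (exd 0)).comp hΨ).differentiable (by simp)
  have hQd : Differentiable ℝ Q := (hP.comp hΨ).differentiable (by simp)
  have hEG : ∀ q : ℝ × V3, (q.1, E (q.1, G q)) = q := fun q => by
    ext1
    · rfl
    · exact hleft q.1 q.2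
  have hUG : ∀ q, U (q.1, G q) = fderiv ℝ G q etd := fun q => by
    change fderiv ℝ G (q.1, E (q.1, G q)) etd = _
    rw [hEG]
  have hBG : ∀ q, Bq (q.1, G q) = fderiv ℝ G q (exd 0) := fun q => by
    change fderiv ℝ G (q.1, E (q.1, G q)) (exd 0) = _
    rw [hEG]
  have hQG : ∀ q, Q (q.1, G q) = Pq q := fun q => by
    change Pq (q.1, E (q.1, G q)) = _
    rw [hEG]
  have hpdG : ∀ t ξ k, pdx k (γ t) ξ = fderiv ℝ G (t, ξ) (exd k) := fun t ξ k =>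
    pdx_of_has k (hGd (t, ξ)).hasFDerivAt
  have hdtG : ∀ t ξ, deriv (fun s => γ s ξ) t = fderiv ℝ G (t, ξ) etd := fun t ξ =>
    dt_of_has (hGd (t, ξ)).hasFDerivAt
  have hu' : u = fun t x => U (t, x) := by
    funext t x; rw [hu, hdtG]
  have hB' : B = fun t x => Bq (t, x) := by
    funext t x; rw [hB, hpdG]
  obtain ⟨hN, hD⟩ := hsol
  have hdet : ∀ q, (Matrix.of fun i j => fderiv ℝ G q (exd j) i).det = 1 := fun q => by
    have := hD q.1 q.2
    simpa only [hpdG] using this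
  have hpdU : ∀ t x k, pdx k (fun y => U (t, y)) x = fderiv ℝ U (t, x) (exd k) := fun t x k =>
    pdx_of_has k (hUd (t, x)).hasFDerivAt
  have hpdB : ∀ t x k, pdx k (fun y => Bq (t, y)) x = fderiv ℝ Bq (t, x) (exd k) := fun t x k =>
    pdx_of_has k (hBd (t, x)).hasFDerivAt
  have hGE : ∀ t x, G (t, η t x) = x := fun t x => hright t x
  have hdivU : ∀ t x, ∑ i, fderiv ℝ U (t, x) (exd i) i = 0 := fun t x => by
    have := div_free hγ hdet hUd etd hUG (t, η t x)
    simpa only [hGE] using this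
  have hdivB : ∀ t x, ∑ i, fderiv ℝ Bq (t, x) (exd i) i = 0 := fun t x => by
    have := div_free hγ hdet hBd (exd 0) hBG (t, η t x)
    simpa only [hGE] using this
  have chU : ∀ t x v, fderiv ℝ (fun q => fderiv ℝ G q etd) (t, η t x) v
      = fderiv ℝ U (t, x) (v.1, fderiv ℝ G (t, η t x) v) := fun t x v => by
    have := chain_dir hGd hUd hUG (t, η t x) v
    simpa only [hGE] using this
  have chB : ∀ t x v, fderiv ℝ (fun q => fderiv ℝ G q (exd 0)) (t, η t x) v
      = fderiv ℝ Bq (t, x) (v.1, fderiv ℝ G (t, η t x) v) := fun t x v => by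
    have := chain_dir hGd hBd hBG (t, η t x) v
    simpa only [hGE] using this
  have chQ : ∀ t x v, fderiv ℝ Pq (t, η t x) v
      = fderiv ℝ Q (t, x) (v.1, fderiv ℝ G (t, η t x) v) := fun t x v => by
    have := chain_dir hGd hQd hQG (t, η t x) v
    simpa only [hGE] using this
  subst hu' hB'
  refine ⟨?_, ?_, ?_, ?_⟩
  · intro t x
    simp only [divV, hpdU]
    exact hdivU t x
  · intro t x
    have hpx : ∀ k, pdx k (p t) x = fderiv ℝ Q (t, x) (exd k)
        - (Bq (t, x) 0 * fderiv ℝ Bq (t, x) (exd k) 0 + Bq (t, x) 1 * fderiv ℝ Bq (t, x) (exd k) 1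
          + Bq (t, x) 2 * fderiv ℝ Bq (t, x) (exd k) 2) := by
      intro k
      have e : p t = fun y => (fun q => Q q - (1/2:ℝ) *
          (Bq q 0 * Bq q 0 + Bq q 1 * Bq q 1 + Bq q 2 * Bq q 2)) (t, y) := by
        funext y
        rw [hp]
        simp only [dotProduct, Fin.sum_univ_three]
        rfl
      have hb : ∀ i, HasFDerivAt (fun q => Bq q i) _ (t, x) := fun i =>
        (hasFDerivAt_pi'.1 (hBd (t, x)).hasFDerivAt) i
      rw [e]
      refine (pdx_of_has k ((hQd (t, x)).hasFDerivAt.sub (((((hb 0).mul (hb 0)).add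
        ((hb 1).mul (hb 1))).add ((hb 2).mul (hb 2))).const_mul (1/2:ℝ)))).trans ?_
      simp
      ring
    have hN1 := hN t (η t x)
    have hpP : ∀ k, pdx k (P t) (η t x) = fderiv ℝ Pq (t, η t x) (exd k) := fun k =>
      pdx_of_has k ((hP.differentiable (by simp)) (t, η t x)).hasFDerivAt
    have htt : deriv (fun s => deriv (fun s' => γ s' (η t x)) s) t
        = fderiv ℝ (fun q => fderiv ℝ G q etd) (t, η t x) etd := by
      simp only [hdtG]
      exact dt_of_has (((smooth_dir hγ etd).differentiable (by simp)) (t, η t x)).hasFDerivAt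
    have h00 : pdx 0 (fun y => pdx 0 (γ t) y) (η t x)
        = fderiv ℝ (fun q => fderiv ℝ G q (exd 0)) (t, η t x) (exd 0) := by
      simp only [hpdG]
      exact pdx_of_has 0
        (((smooth_dir hγ (exd 0)).differentiable (by simp)) (t, η t x)).hasFDerivAt
    have hdu : deriv (fun s => U (s, x)) t = fderiv ℝ U (t, x) etd :=
      dt_of_has (hUd (t, x)).hasFDerivAt
    rw [htt, h00, chU, chB, hpP, hpP, hpP, chQ, chQ, chQ] at hN1
    simp only [lin_expand, hpdG] at hN1
    have hd := hdet (t, η t x)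
    simp only [Matrix.det_fin_three, Matrix.of_apply] at hd
    have eU : fderiv ℝ G (t, η t x) etd = U (t, x) := rfl
    have eB : fderiv ℝ G (t, η t x) (exd 0) = Bq (t, x) := rfl
    rw [eU] at hN1
    rw [eB] at hN1 hd
    have e1 : etd.1 = 1 := rfl
    have e2 : ∀ k, (exd k).1 = 0 := fun k => rfl
    simp only [e1, e2] at hN1
    generalize fderiv ℝ G (t, η t x) (exd 1) = b at *
    generalize fderiv ℝ G (t, η t x) (exd 2) = c at *
    simp only [hdu]
    have N0 := congrFun hN1 0
    have N1 := congrFun hN1 1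
    have N2 := congrFun hN1 2
    simp only [Pi.add_apply, Pi.sub_apply, Pi.smul_apply, Pi.zero_apply, smul_eq_mul, cross_apply, advectV, gradV, curlV] at N0 N1 N2
    simp at N0 N1 N2
    ext i
    simp only [Pi.add_apply, Pi.sub_apply, Pi.smul_apply, Pi.zero_apply, smul_eq_mul, cross_apply, advectV, gradV, curlV]
    fin_cases i <;>
      simp [Fin.sum_univ_three, hpdU, hpdB, hpx]
    all_goals clear * - N0 N1 N2 hd
    · linear_combination N0 - fderiv ℝ Q (t, x) (exd 0) * hd
    · linear_combination N1 - fderiv ℝ Q (t, x) (exd 1) * hd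
    · linear_combination N2 - fderiv ℝ Q (t, x) (exd 2) * hd
  · intro t x
    have hs := symm_dir hγ (t, η t x) etd (exd 0)
    rw [chU, chB, lin_expand (fderiv ℝ U (t, x)), lin_expand (fderiv ℝ Bq (t, x)) etd.1] at hs
    have eU : fderiv ℝ G (t, η t x) etd = U (t, x) := rfl
    have eB : fderiv ℝ G (t, η t x) (exd 0) = Bq (t, x) := rfl
    have e1 : etd.1 = 1 := rfl
    have e2 : ∀ k, (exd k).1 = 0 := fun k => rfl
    rw [eU, eB, e1, e2] at hs
    have hdb : deriv (fun s => Bq (s, x)) t = fderiv ℝ Bq (t, x) etd :=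
      dt_of_has (hBd (t, x)).hasFDerivAt
    have hb : ∀ i, HasFDerivAt (fun q => Bq q i) _ (t, x) := fun i =>
      (hasFDerivAt_pi'.1 (hBd (t, x)).hasFDerivAt) i
    have hv : ∀ i, HasFDerivAt (fun q => U q i) _ (t, x) := fun i =>
      (hasFDerivAt_pi'.1 (hUd (t, x)).hasFDerivAt) i
    have hcr : ∀ k, pdx k (fun y => crossProduct (U (t, y)) (Bq (t, y))) x
        = crossProduct (fderiv ℝ U (t, x) (exd k)) (Bq (t, x))
          + crossProduct (U (t, x)) (fderiv ℝ Bq (t, x) (exd k)) := by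
      intro k
      have hc : DifferentiableAt ℝ (fun q => crossProduct (U q) (Bq q)) (t, x) := by
        rw [differentiableAt_pi]
        intro i
        have a := fun i => (hb i).differentiableAt
        have b := fun i => (hv i).differentiableAt
        fin_cases i <;> simp [crossProduct]
        · exact ((b 1).mul (a 2)).sub ((b 2).mul (a 1))
        · exact ((b 2).mul (a 0)).sub ((b 0).mul (a 2))
        · exact ((b 0).mul (a 1)).sub ((b 1).mul (a 0))
      have hc' := hasFDerivAt_pi'.1 hc.hasFDerivAt
      rw [pdx_of_has k hc.hasFDerivAt]
      generalize fderiv ℝ (fun q => crossProduct (U q) (Bq q)) (t, x) = L at hc' ⊢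
      have comp : ∀ i j, HasFDerivAt (fun q => U q i * Bq q j - U q j * Bq q i) _ (t, x) :=
        fun i j => ((hv i).mul (hb j)).sub ((hv j).mul (hb i))
      ext i
      simp only [Pi.add_apply, cross_apply]
      fin_cases i
      · have := congrArg (fun L => L (exd k)) ((hc' 0).unique (comp 1 2))
        simp at this
        simp [this]
        ring
      · have := congrArg (fun L => L (exd k)) ((hc' 1).unique (comp 2 0))
        simp at this
        simp [this]
        ring
      · have := congrArg (fun L => L (exd k)) ((hc' 2).unique (comp 0 1))
        simp at this
        simp [this]
        ring
    have dU := hdivU t x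
    have dB := hdivB t x
    rw [Fin.sum_univ_three] at dU dB
    simp only [hdb]
    have N0 := congrFun hs 0
    have N1 := congrFun hs 1
    have N2 := congrFun hs 2
    simp at N0 N1 N2
    ext i
    simp only [curlV, hcr]
    simp only [Pi.add_apply, cross_apply]
    fin_cases i <;> simp
    · linear_combination -N0 + Bq (t, x) 0 * dU - U (t, x) 0 * dB
    · linear_combination -N1 + Bq (t, x) 1 * dU - U (t, x) 1 * dB
    · linear_combination -N2 + Bq (t, x) 2 * dU - U (t, x) 2 * dB
  · intro t x
    simp only [divV, hpdB]
    exact hdivB t x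
end
end

section
/- Let Ω ⊆ ℝ × ℝ³ be open and let u, B : Ω → ℝ³, ρ, p : Ω → ℝ be smooth with ρ > 0 on Ω. Set b = B/ρ and P = p + ½|B|². Then (u, B, ρ, p) satisfies the ideal MHD system: ρ_t + u·∇ρ + ρ div u = 0, ρ(u_t + (u·∇)u) + B × curl B + ∇p = 0, B_t = curl(u × B), div B = 0, if and only if (u, b, ρ, P) satisfies the transformed system: ρ_t + u·∇ρ + ρ div u = 0, ρ(D_t u − D_s(ρ b)) + ∇P = 0, D_t b = D_s u, div(ρ b) = 0, where D_t = ∂_t + u·∇ and D_s = b·∇ act componentwise on vector fields. -/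
open Matrix

noncomputable section

/-- Partial derivative with respect to time of a field on `ℝ × ℝ³`. -/
noncomputable def pt {E : Type*} [NormedAddCommGroup E] [NormedSpace ℝ E]
    (F : ℝ × V3 → E) (q : ℝ × V3) : E :=
  deriv (fun s => F (s, q.2)) q.1

/-- Spatial partial derivative in the `i`-th direction of a field on `ℝ × ℝ³`. -/
noncomputable def px {E : Type*} [NormedAddCommGroup E] [NormedSpace ℝ E]
    (i : Fin 3) (F : ℝ × V3 → E) (q : ℝ × V3) : E :=
  deriv (fun s => F (q.1, Function.update q.2 i s)) (q.2 i)

/-- Spatial divergence. -/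
noncomputable def divx (v : ℝ × V3 → V3) (q : ℝ × V3) : ℝ :=
  ∑ i, px i v q i

/-- Spatial gradient. -/
noncomputable def gradx (f : ℝ × V3 → ℝ) (q : ℝ × V3) : V3 :=
  fun i => px i f q

/-- Spatial curl. -/
noncomputable def curlx (v : ℝ × V3 → V3) (q : ℝ × V3) : V3 :=
  ![px 1 v q 2 - px 2 v q 1,
    px 2 v q 0 - px 0 v q 2,
    px 0 v q 1 - px 1 v q 0]

/-- Convective derivative `(u·∇)v`, acting componentwise. -/
noncomputable def advect (u v : ℝ × V3 → V3) (q : ℝ × V3) : V3 :=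
  fun i => ∑ j, u q j * px j v q i

theorem cr0 (v w : V3) : crossProduct v w 0 = v 1 * w 2 - v 2 * w 1 := by simp [cross_apply]
theorem cr1 (v w : V3) : crossProduct v w 1 = v 2 * w 0 - v 0 * w 2 := by simp [cross_apply]
theorem cr2 (v w : V3) : crossProduct v w 2 = v 0 * w 1 - v 1 * w 0 := by simp [cross_apply]

theorem curve_facts (c : ℝ → ℝ × V3) (s : ℝ) (hc : DifferentiableAt ℝ c s)
    (u B : ℝ × V3 → V3) (ρ p : ℝ × V3 → ℝ)
    (hu : DifferentiableAt ℝ u (c s)) (hB : DifferentiableAt ℝ B (c s))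
    (hρ : DifferentiableAt ℝ ρ (c s)) (hp : DifferentiableAt ℝ p (c s))
    (h0 : ρ (c s) ≠ 0)
    (b : ℝ × V3 → V3) (hb : ∀ q, b q = (ρ q)⁻¹ • B q)
    (P : ℝ × V3 → ℝ) (hP : ∀ q, P q = p q + (1 / 2 : ℝ) * (B q ⬝ᵥ B q)) :
    (∀ i, deriv (fun t => b (c t)) s i = (ρ (c s))⁻¹ * deriv (fun t => B (c t)) s i
      - deriv (fun t => ρ (c t)) s / ρ (c s) ^ 2 * B (c s) i) ∧
    deriv (fun t => ρ (c t) • b (c t)) s = deriv (fun t => B (c t)) s ∧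
    deriv (fun t => P (c t)) s = deriv (fun t => p (c t)) s
      + ∑ i, B (c s) i * deriv (fun t => B (c t)) s i ∧
    deriv (fun t => crossProduct (u (c t)) (B (c t))) s =
      crossProduct (deriv (fun t => u (c t)) s) (B (c s))
      + crossProduct (u (c s)) (deriv (fun t => B (c t)) s) := by
  have du := (DifferentiableAt.comp (g := u) s hu hc).hasDerivAt
  have dB := (DifferentiableAt.comp (g := B) s hB hc).hasDerivAt
  have dρ := (DifferentiableAt.comp (g := ρ) s hρ hc).hasDerivAt
  have dp := (DifferentiableAt.comp (g := p) s hp hc).hasDerivAt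
  have du' := hasDerivAt_pi.1 du
  have dB' := hasDerivAt_pi.1 dB
  change HasDerivAt (fun t => ρ (c t)) (deriv (fun t => ρ (c t)) s) s at dρ
  change HasDerivAt (fun t => p (c t)) (deriv (fun t => p (c t)) s) s at dp
  change HasDerivAt (fun t => B (c t)) (deriv (fun t => B (c t)) s) s at dB
  change ∀ i, HasDerivAt (fun t => B (c t) i) (deriv (fun t => B (c t)) s i) s at dB'
  change ∀ i, HasDerivAt (fun t => u (c t) i) (deriv (fun t => u (c t)) s i) s at du'
  refine ⟨fun i => ?_, ?_, ?_, ?_⟩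
  · have h := (dρ.inv h0).smul dB
    have e : (fun t => b (c t)) = (fun t => ρ (c t))⁻¹ • (fun t => B (c t)) := by
      funext t
      simp [hb]
    rw [e, h.deriv]
    simp
    ring
  · apply Filter.EventuallyEq.deriv_eq
    filter_upwards [dρ.continuousAt.eventually_ne h0] with t ht
    rw [hb, smul_smul, mul_inv_cancel₀ ht, one_smul]
  · have h := dp.add ((HasDerivAt.fun_sum (u := Finset.univ)
      (fun i _ => (dB' i).mul (dB' i))).const_mul (1 / 2 : ℝ))
    have e : (fun t => P (c t)) = (fun t => p (c t)) + fun t => (1 / 2 : ℝ) *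
        ∑ i, ((fun t => B (c t) i) * (fun t => B (c t) i)) t := by
      funext t
      simp [hP, dotProduct]
    rw [e, h.deriv]
    simp only [Fin.sum_univ_three]
    ring
  · apply HasDerivAt.deriv
    rw [hasDerivAt_pi]
    have key : ∀ i j, HasDerivAt (fun t => u (c t) i * B (c t) j - u (c t) j * B (c t) i)
        (deriv (fun t => u (c t)) s i * B (c s) j + u (c s) i * deriv (fun t => B (c t)) s j
        - (deriv (fun t => u (c t)) s j * B (c s) i + u (c s) j * deriv (fun t => B (c t)) s i)) s :=
      fun i j => ((du' i).mul (dB' j)).sub ((du' j).mul (dB' i))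
    intro i
    fin_cases i
    · have h := (key 1 2).congr_deriv (g' := (crossProduct (deriv (fun t => u (c t)) s) (B (c s))
        + crossProduct (u (c s)) (deriv (fun t => B (c t)) s)) 0)
        (by rw [Pi.add_apply, cr0, cr0]; ring)
      simp only [← cr0] at h
      exact h
    · have h := (key 2 0).congr_deriv (g' := (crossProduct (deriv (fun t => u (c t)) s) (B (c s))
        + crossProduct (u (c s)) (deriv (fun t => B (c t)) s)) 1)
        (by rw [Pi.add_apply, cr1, cr1]; ring)
      simp only [← cr1] at h
      exact h
    · have h := (key 0 1).congr_deriv (g' := (crossProduct (deriv (fun t => u (c t)) s) (B (c s))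
        + crossProduct (u (c s)) (deriv (fun t => B (c t)) s)) 2)
        (by rw [Pi.add_apply, cr2, cr2]; ring)
      simp only [← cr2] at h
      exact h

/-- Equivalence of the ideal MHD system with its transformed form in terms of
`b = B/ρ`, `P = p + ½|B|²`, `D_t = ∂_t + u·∇`, `D_s = b·∇` on an open set `Ω`
where the smooth fields have `ρ > 0`. -/
theorem mhd_transformed_equivalence
    (Ω : Set (ℝ × V3)) (hΩ : IsOpen Ω)
    (u B : ℝ × V3 → V3) (ρ p : ℝ × V3 → ℝ)
    (hu : ContDiffOn ℝ (⊤ : ℕ∞) u Ω) (hB : ContDiffOn ℝ (⊤ : ℕ∞) B Ω)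
    (hρ : ContDiffOn ℝ (⊤ : ℕ∞) ρ Ω) (hp : ContDiffOn ℝ (⊤ : ℕ∞) p Ω)
    (hρpos : ∀ q ∈ Ω, 0 < ρ q)
    (b : ℝ × V3 → V3) (hb : ∀ q, b q = (ρ q)⁻¹ • B q)
    (P : ℝ × V3 → ℝ) (hP : ∀ q, P q = p q + (1 / 2 : ℝ) * (B q ⬝ᵥ B q)) :
    ((∀ q ∈ Ω, pt ρ q + u q ⬝ᵥ gradx ρ q + ρ q * divx u q = 0) ∧
     (∀ q ∈ Ω,
        ρ q • (pt u q + advect u u q)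
          + crossProduct (B q) (curlx B q) + gradx p q = 0) ∧
     (∀ q ∈ Ω, pt B q = curlx (fun q' => crossProduct (u q') (B q')) q) ∧
     (∀ q ∈ Ω, divx B q = 0))
    ↔
    ((∀ q ∈ Ω, pt ρ q + u q ⬝ᵥ gradx ρ q + ρ q * divx u q = 0) ∧
     (∀ q ∈ Ω,
        ρ q • ((pt u q + advect u u q) - advect b (fun q' => ρ q' • b q') q)
          + gradx P q = 0) ∧
     (∀ q ∈ Ω, pt b q + advect u b q = advect b u q) ∧
     (∀ q ∈ Ω, divx (fun q' => ρ q' • b q') q = 0)) := by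
  have hd : ∀ q ∈ Ω, DifferentiableAt ℝ u q ∧ DifferentiableAt ℝ B q ∧
      DifferentiableAt ℝ ρ q ∧ DifferentiableAt ℝ p q := fun q hq =>
    have hn := hΩ.mem_nhds hq
    ⟨(hu.contDiffAt hn).differentiableAt (by simp), (hB.contDiffAt hn).differentiableAt (by simp),
     (hρ.contDiffAt hn).differentiableAt (by simp), (hp.contDiffAt hn).differentiableAt (by simp)⟩
  have ft : ∀ q ∈ Ω, ∀ i, pt b q i = (ρ q)⁻¹ * pt B q i - pt ρ q / ρ q ^ 2 * B q i := by
    intro q hq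
    obtain ⟨h1, h2, h3, h4⟩ := hd q hq
    exact (curve_facts (fun t => (t, q.2)) q.1 (by fun_prop) u B ρ p h1 h2 h3 h4
      (hρpos q hq).ne' b hb P hP).1
  have fx : ∀ q ∈ Ω, ∀ j, (∀ i, px j b q i = (ρ q)⁻¹ * px j B q i - px j ρ q / ρ q ^ 2 * B q i) ∧
      px j (fun q' => ρ q' • b q') q = px j B q ∧
      px j P q = px j p q + ∑ i, B q i * px j B q i ∧
      px j (fun q' => crossProduct (u q') (B q')) q =
        crossProduct (px j u q) (B q) + crossProduct (u q) (px j B q) := by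
    intro q hq j
    obtain ⟨h1, h2, h3, h4⟩ := hd q hq
    have e : (q.1, Function.update q.2 j (q.2 j)) = q := by simp
    have hc : DifferentiableAt ℝ (fun t => (q.1, Function.update q.2 j t)) (q.2 j) :=
      (differentiableAt_const _).prodMk (hasDerivAt_update q.2 j (q.2 j)).differentiableAt
    have := curve_facts (fun t => (q.1, Function.update q.2 j t)) (q.2 j) hc u B ρ p
      (by rwa [e]) (by rwa [e]) (by rwa [e]) (by rwa [e])
      (by rw [e]; exact (hρpos q hq).ne') b hb P hP
    simp only [e] at this
    exact this
  have hdiv : ∀ q ∈ Ω, divx (fun q' => ρ q' • b q') q = divx B q := by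
    intro q hq
    simp only [divx, (fx q hq _).2.1]
  have hmom : ∀ q ∈ Ω, ρ q • ((pt u q + advect u u q) - advect b (fun q' => ρ q' • b q') q)
      + gradx P q = ρ q • (pt u q + advect u u q)
          + crossProduct (B q) (curlx B q) + gradx p q := by
    intro q hq
    have h0 := (hρpos q hq).ne'
    funext i
    have hs := fun j => (fx q hq j).2.1
    fin_cases i <;>
    · simp [advect, gradx, curlx, cr0, cr1, cr2, hs, (fx q hq _).2.2.1,
        Fin.sum_univ_three]
      simp only [hb, Pi.smul_apply, smul_eq_mul]
      field_simp
      ring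
  have hind : ∀ q ∈ Ω, pt ρ q + u q ⬝ᵥ gradx ρ q + ρ q * divx u q = 0 → divx B q = 0 →
      (pt B q = curlx (fun q' => crossProduct (u q') (B q')) q ↔
        pt b q + advect u b q = advect b u q) := by
    intro q hq hm hD
    have h0 := (hρpos q hq).ne'
    have key : ∀ i, ρ q * ((pt b q + advect u b q) i - advect b u q i) =
        pt B q i - curlx (fun q' => crossProduct (u q') (B q')) q i := by
      intro i
      have hm' : pt ρ q = - (u q ⬝ᵥ gradx ρ q) - ρ q * divx u q := by linarith
      simp only [divx, Fin.sum_univ_three] at hD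
      fin_cases i
      · simp [advect, curlx, cr0, cr1, cr2, (fx q hq _).1, (fx q hq _).2.2.2, ft q hq, hb,
          Fin.sum_univ_three, hm', divx, gradx, dotProduct]
        field_simp
        linear_combination ((u q 0) * ρ q) * hD
      · simp [advect, curlx, cr0, cr1, cr2, (fx q hq _).1, (fx q hq _).2.2.2, ft q hq, hb,
          Fin.sum_univ_three, hm', divx, gradx, dotProduct]
        field_simp
        linear_combination ((u q 1) * ρ q) * hD
      · simp [advect, curlx, cr0, cr1, cr2, (fx q hq _).1, (fx q hq _).2.2.2, ft q hq, hb,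
          Fin.sum_univ_three, hm', divx, gradx, dotProduct]
        field_simp
        linear_combination ((u q 2) * ρ q) * hD
    constructor
    · intro h
      funext i
      have := key i
      rw [h, sub_self] at this
      exact sub_eq_zero.1 ((mul_eq_zero.1 this).resolve_left h0)
    · intro h
      funext i
      have := key i
      rw [h, sub_self, mul_zero] at this
      exact (sub_eq_zero.1 this.symm)
  constructor
  · rintro ⟨h1, h2, h3, h4⟩
    exact ⟨h1, fun q hq => (hmom q hq).trans (h2 q hq),
      fun q hq => (hind q hq (h1 q hq) (h4 q hq)).1 (h3 q hq),
      fun q hq => (hdiv q hq).trans (h4 q hq)⟩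
  · rintro ⟨h1, h2, h3, h4⟩
    have h4' : ∀ q ∈ Ω, divx B q = 0 := fun q hq => (hdiv q hq).symm.trans (h4 q hq)
    exact ⟨h1, fun q hq => (hmom q hq).symm.trans (h2 q hq),
      fun q hq => (hind q hq (h1 q hq) (h4' q hq)).2 (h3 q hq), h4'⟩
end
end

section
/- Let a, b, φ : ℝ → ℝ and A, B : ℝ² → ℝ be smooth, let k ∈ ℝ, and suppose b(μ) + B(ξ²,ξ³) cos(φ(μ) + A(ξ²,ξ³)) > 0 on the domain considered. Define τ¹(μ,ξ²,ξ³) = a(μ) + B(ξ²,ξ³) sin(φ(μ) + A(ξ²,ξ³)), λ(μ,ξ²,ξ³) = √(b(μ) + B(ξ²,ξ³) cos(φ(μ) + A(ξ²,ξ³))), τ²(μ,λ) = λ cos kμ, τ³(μ,λ) = λ sin kμ. Then at every point of the domain, (τ²_μ τ³_λ − τ²_λ τ³_μ)·(λ_{ξ²} τ¹_{ξ³} − λ_{ξ³} τ¹_{ξ²}) = (k·B(ξ²,ξ³)/2)·(∂A/∂ξ² · ∂B/∂ξ³ − ∂A/∂ξ³ · ∂B/∂ξ²), where the subscripts denote the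 indicated partial derivatives, those of τ², τ³ taken with respect to their arguments (μ, λ) and evaluated at (μ, λ(μ,ξ²,ξ³)). -/
open Real

noncomputable section

/-- Partial derivative of `f(s,b,c)` with respect to its first argument. -/
noncomputable def P1 (f : ℝ → ℝ → ℝ → ℝ) : ℝ → ℝ → ℝ → ℝ :=
  fun s b c => deriv (fun x => f x b c) s

/-- Partial derivative of `f(s,b,c)` with respect to its second argument. -/
noncomputable def P2 (f : ℝ → ℝ → ℝ → ℝ) : ℝ → ℝ → ℝ → ℝ :=
  fun s b c => deriv (fun x => f s x c) b

/-- Partial derivative of `f(s,b,c)` with respect to its third argument. -/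
noncomputable def P3 (f : ℝ → ℝ → ℝ → ℝ) : ℝ → ℝ → ℝ → ℝ :=
  fun s b c => deriv (fun x => f s b x) c

/-- Partial derivative of `f(x,y)` with respect to its first argument. -/
noncomputable def Q1 (f : ℝ → ℝ → ℝ) : ℝ → ℝ → ℝ :=
  fun x y => deriv (fun s => f s y) x

/-- Partial derivative of `f(x,y)` with respect to its second argument. -/
noncomputable def Q2 (f : ℝ → ℝ → ℝ) : ℝ → ℝ → ℝ :=
  fun x y => deriv (fun s => f x s) y

/-- The toroidal/knotted magnetic surface family: for
`τ¹ = a(μ) + B sin(φ(μ) + A)`, `λ = √(b(μ) + B cos(φ(μ) + A))`,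
`τ² = λ cos kμ`, `τ³ = λ sin kμ`, on the (open) domain where
`b(μ) + B cos(φ(μ) + A) > 0` one has
`(τ²_μ τ³_λ − τ²_λ τ³_μ)(λ₂ τ¹₃ − λ₃ τ¹₂) = (kB/2)·∂(A,B)/∂(ξ²,ξ³)`. -/
theorem toroidal_knotted_surfaces
    (a b φ : ℝ → ℝ) (A B : ℝ → ℝ → ℝ) (k : ℝ)
    (ha : ContDiff ℝ (⊤ : ℕ∞) a) (hb : ContDiff ℝ (⊤ : ℕ∞) b) (hφ : ContDiff ℝ (⊤ : ℕ∞) φ)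
    (hA : ContDiff ℝ (⊤ : ℕ∞) (fun q : ℝ × ℝ => A q.1 q.2))
    (hB : ContDiff ℝ (⊤ : ℕ∞) (fun q : ℝ × ℝ => B q.1 q.2))
    (D : Set (ℝ × ℝ × ℝ)) (hD : IsOpen D)
    (hpos : ∀ m x y : ℝ, (m, x, y) ∈ D →
      0 < b m + B x y * cos (φ m + A x y))
    (tau1 lam : ℝ → ℝ → ℝ → ℝ) (tau2 tau3 : ℝ → ℝ → ℝ)
    (htau1 : ∀ m x y : ℝ, tau1 m x y = a m + B x y * sin (φ m + A x y))
    (hlam : ∀ m x y : ℝ, lam m x y = sqrt (b m + B x y * cos (φ m + A x y)))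
    (htau2 : ∀ m l : ℝ, tau2 m l = l * cos (k * m))
    (htau3 : ∀ m l : ℝ, tau3 m l = l * sin (k * m)) :
    ∀ m x y : ℝ, (m, x, y) ∈ D →
      (Q1 tau2 m (lam m x y) * Q2 tau3 m (lam m x y)
          - Q2 tau2 m (lam m x y) * Q1 tau3 m (lam m x y))
        * (P2 lam m x y * P3 tau1 m x y - P3 lam m x y * P2 tau1 m x y)
      = (k * B x y / 2) * (Q1 A x y * Q2 B x y - Q2 A x y * Q1 B x y) := by
  intro m x y hm
  have hp := hpos m x y hm
  have hAd := hA.differentiable (by simp)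
  have hBd := hB.differentiable (by simp)
  have hA1 : HasDerivAt (fun s => A s y) (Q1 A x y) x := by
    have : Differentiable ℝ (fun s => A s y) :=
      hAd.comp (g := fun q : ℝ × ℝ => A q.1 q.2) (f := fun s : ℝ => (s, y)) (by fun_prop)
    exact (this x).hasDerivAt
  have hA2 : HasDerivAt (fun s => A x s) (Q2 A x y) y := by
    have : Differentiable ℝ (fun s => A x s) :=
      hAd.comp (g := fun q : ℝ × ℝ => A q.1 q.2) (f := fun s : ℝ => (x, s)) (by fun_prop)
    exact (this y).hasDerivAt
  have hB1 : HasDerivAt (fun s => B s y) (Q1 B x y) x := by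
    have : Differentiable ℝ (fun s => B s y) :=
      hBd.comp (g := fun q : ℝ × ℝ => B q.1 q.2) (f := fun s : ℝ => (s, y)) (by fun_prop)
    exact (this x).hasDerivAt
  have hB2 : HasDerivAt (fun s => B x s) (Q2 B x y) y := by
    have : Differentiable ℝ (fun s => B x s) :=
      hBd.comp (g := fun q : ℝ × ℝ => B q.1 q.2) (f := fun s : ℝ => (x, s)) (by fun_prop)
    exact (this y).hasDerivAt
  have hL : 0 < lam m x y := by rw [hlam]; exact Real.sqrt_pos.mpr hp
  have e1 : P2 tau1 m x y = Q1 B x y * sin (φ m + A x y)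
      + B x y * (cos (φ m + A x y) * Q1 A x y) := by
    simp only [P2, htau1]
    exact ((hB1.mul (hA1.const_add (φ m)).sin).const_add (a m)).deriv
  have e2 : P3 tau1 m x y = Q2 B x y * sin (φ m + A x y)
      + B x y * (cos (φ m + A x y) * Q2 A x y) := by
    simp only [P3, htau1]
    exact ((hB2.mul (hA2.const_add (φ m)).sin).const_add (a m)).deriv
  have e3 : P2 lam m x y = (Q1 B x y * cos (φ m + A x y)
      + B x y * (-sin (φ m + A x y) * Q1 A x y)) / (2 * lam m x y) := by
    simp only [P2, hlam]
    exact (((hB1.mul (hA1.const_add (φ m)).cos).const_add (b m)).sqrt hp.ne').deriv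
  have e4 : P3 lam m x y = (Q2 B x y * cos (φ m + A x y)
      + B x y * (-sin (φ m + A x y) * Q2 A x y)) / (2 * lam m x y) := by
    simp only [P3, hlam]
    exact (((hB2.mul (hA2.const_add (φ m)).cos).const_add (b m)).sqrt hp.ne').deriv
  have hk : HasDerivAt (fun s : ℝ => k * s) k m := by
    simpa using (hasDerivAt_id m).const_mul k
  generalize lam m x y = L at *
  have f1 : Q1 tau2 m L = L * (-sin (k * m) * k) := by
    simp only [Q1, htau2]
    exact (hk.cos.const_mul L).deriv
  have f2 : Q1 tau3 m L = L * (cos (k * m) * k) := by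
    simp only [Q1, htau3]
    exact (hk.sin.const_mul L).deriv
  have f3 : Q2 tau2 m L = cos (k * m) := by
    simp only [Q2, htau2]
    simpa using ((hasDerivAt_id L).mul_const (cos (k * m))).deriv
  have f4 : Q2 tau3 m L = sin (k * m) := by
    simp only [Q2, htau3]
    simpa using ((hasDerivAt_id L).mul_const (sin (k * m))).deriv
  rw [e1, e2, e3, e4, f1, f2, f3, f4]
  have s1 := Real.sin_sq_add_cos_sq (k * m)
  have s2 := Real.sin_sq_add_cos_sq (φ m + A x y)
  have hL' := hL.ne'
  generalize sin (k * m) = S at *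
  generalize cos (k * m) = C at *
  generalize sin (φ m + A x y) = s at *
  generalize cos (φ m + A x y) = c at *
  have g1 : L * (-S * k) * S - C * (L * (C * k)) = -(k * L) := by
    linear_combination (-(k * L)) * s1
  rw [g1]
  field_simp
  linear_combination (k * B x y * (Q1 A x y * Q2 B x y - Q2 A x y * Q1 B x y)) * s2
end
end

section
/- Let k ∈ ℝ, define h(p,ρ) = ρᵏ for ρ > 0, and let c₁, c₂, c₃ ∈ ℝ. Then the classifying equation 2c₁(h + 4p h_p + 5ρ h_ρ) − 4c₂(p h_p + ρ h_ρ) − c₃ h_p = 0 holds for all p ∈ ℝ and all ρ > 0 if and only if c₁(1 + 5k) − 2k c₂ = 0 (with c₃ arbitrary). -/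
open Real

noncomputable section

/-- Partial derivative `h_p` of `h(p,ρ)` with respect to the pressure `p`. -/
noncomputable def Hp (h : ℝ → ℝ → ℝ) : ℝ → ℝ → ℝ :=
  fun p r => deriv (fun s => h s r) p

/-- Partial derivative `h_ρ` of `h(p,ρ)` with respect to the density `ρ`. -/
noncomputable def Hr (h : ℝ → ℝ → ℝ) : ℝ → ℝ → ℝ :=
  fun p r => deriv (fun s => h p s) r

/-- The left-hand side of the classifying equation
`2c₁(h + 4p h_p + 5ρ h_ρ) − 4c₂(p h_p + ρ h_ρ) − c₃ h_p`. -/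
noncomputable def classify (c₁ c₂ c₃ : ℝ) (h : ℝ → ℝ → ℝ) (p r : ℝ) : ℝ :=
  2 * c₁ * (h p r + 4 * p * Hp h p r + 5 * r * Hr h p r)
    - 4 * c₂ * (p * Hp h p r + r * Hr h p r) - c₃ * Hp h p r


/-- Group classification, case `h(p,ρ) = ρᵏ`: the classifying equation holds
identically for `p ∈ ℝ`, `ρ > 0` iff `c₁(1 + 5k) − 2k c₂ = 0` (`c₃` arbitrary). -/
theorem classification_rho_pow
    (k c₁ c₂ c₃ : ℝ) :
    (∀ p r : ℝ, 0 < r → classify c₁ c₂ c₃ (fun _ r' => r' ^ k) p r = 0)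
      ↔ c₁ * (1 + 5 * k) - 2 * k * c₂ = 0 := by
  have key : ∀ p r : ℝ, 0 < r → classify c₁ c₂ c₃ (fun _ r' => r' ^ k) p r
      = 2 * (c₁ * (1 + 5 * k) - 2 * k * c₂) * r ^ k := by
    intro p r hr
    have h1 : Hp (fun _ r' => r' ^ k) p r = 0 := by simp [Hp]
    have h2 : r * Hr (fun _ r' => r' ^ k) p r = k * r ^ k := by
      have h3 : Hr (fun _ r' => r' ^ k) p r = k * r ^ (k - 1) :=
        (Real.hasDerivAt_rpow_const (Or.inl hr.ne')).deriv
      rw [h3, Real.rpow_sub_one hr.ne']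
      field_simp
    unfold classify
    rw [h1]
    linear_combination (10 * c₁ - 4 * c₂) * h2
  constructor
  · intro h
    have h1 := h 0 1 one_pos
    rw [key 0 1 one_pos, Real.one_rpow] at h1
    linarith
  · intro h p r hr
    rw [key p r hr, h]
    ring
end
end

section
/- Let k ∈ ℝ and let f : ℝ → ℝ be differentiable; define h(p,ρ) = pᵏ f(ρ pᵏ⁻¹) on the region p > 0, ρ > 0. If c₁, c₂, c₃ ∈ ℝ satisfy (1 + 4k)c₁ − 2k c₂ = 0 and c₃ = 0, then the classifying equation 2c₁(h + 4p h_p + 5ρ h_ρ) − 4c₂(p h_p + ρ h_ρ) − c₃ h_p = 0 holds for all p > 0 and ρ > 0. -/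
open Real

noncomputable section

/-- Group classification, case `h(p,ρ) = pᵏ f(ρ pᵏ⁻¹)` on `p > 0`, `ρ > 0`:
if `(1 + 4k)c₁ − 2k c₂ = 0` and `c₃ = 0`, the classifying equation holds. -/
theorem classification_pk_f
    (k c₁ c₂ c₃ : ℝ) (f : ℝ → ℝ) (hf : Differentiable ℝ f)
    (hc : (1 + 4 * k) * c₁ - 2 * k * c₂ = 0) (hc₃ : c₃ = 0) :
    ∀ p r : ℝ, 0 < p → 0 < r →
      classify c₁ c₂ c₃ (fun p' r' => p' ^ k * f (r' * p' ^ (k - 1))) p r = 0 := by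
  intro p r hp hr
  have d1 : HasDerivAt (fun s : ℝ => s ^ k) (k * p ^ (k - 1)) p :=
    Real.hasDerivAt_rpow_const (Or.inl hp.ne')
  have d2 : HasDerivAt (fun s : ℝ => s ^ (k - 1)) ((k - 1) * p ^ (k - 1 - 1)) p :=
    Real.hasDerivAt_rpow_const (Or.inl hp.ne')
  have df := (hf (r * p ^ (k - 1))).hasDerivAt
  have dp := d1.mul (HasDerivAt.comp p df (d2.const_mul r))
  have dr := (HasDerivAt.comp r df ((hasDerivAt_id r).mul_const (p ^ (k - 1)))).const_mul (p ^ k)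
  have ep : Hp (fun p' r' => p' ^ k * f (r' * p' ^ (k - 1))) p r = _ := dp.deriv
  have er : Hr (fun p' r' => p' ^ k * f (r' * p' ^ (k - 1))) p r = _ := dr.deriv
  have e1 : p ^ k = p * p ^ (k - 1) := by
    rw [Real.rpow_sub_one hp.ne']; field_simp
  have e2 : p ^ (k - 1) = p * p ^ (k - 1 - 1) := by
    rw [Real.rpow_sub_one hp.ne' (k - 1)]; field_simp
  unfold classify
  rw [ep, er, hc₃]
  simp only [Function.comp]
  generalize deriv f (r * p ^ (k - 1)) = D
  generalize f (r * p ^ (k - 1)) = F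
  rw [e1, e2]
  generalize p ^ (k - 1 - 1) = X
  linear_combination (2 * p * (p * X) * F + 2 * p * (p * X) * r * (p * X) * D) * hc
end
end

section
/- Let f : ℝ → ℝ be differentiable and define h(p,ρ) = f(ρ e^p)/ρ on the region ρ > 0. If c₁ ∈ ℝ and c₂ = c₃ = 2c₁, then the classifying equation 2c₁(h + 4p h_p + 5ρ h_ρ) − 4c₂(p h_p + ρ h_ρ) − c₃ h_p = 0 holds for all p ∈ ℝ and all ρ > 0. -/
open Real

noncomputable section

/-- Group classification, case `h(p,ρ) = f(ρ eᵖ)/ρ` on `ρ > 0`: if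
`c₂ = c₃ = 2c₁`, the classifying equation holds. -/
theorem classification_f_rho_exp
    (c₁ c₂ c₃ : ℝ) (f : ℝ → ℝ) (hf : Differentiable ℝ f)
    (hc₂ : c₂ = 2 * c₁) (hc₃ : c₃ = 2 * c₁) :
    ∀ p r : ℝ, 0 < r →
      classify c₁ c₂ c₃ (fun p' r' => f (r' * Real.exp p') / r') p r = 0 := by
  intro p r hr
  have hr0 : r ≠ 0 := hr.ne'
  have hF := (hf (r * Real.exp p)).hasDerivAt
  have h1 : HasDerivAt (fun s => f (r * Real.exp s) / r)
      (deriv f (r * Real.exp p) * (r * Real.exp p) / r) p :=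
    (HasDerivAt.comp p hF ((Real.hasDerivAt_exp p).const_mul r)).div_const r
  have h2 : HasDerivAt (fun s => f (s * Real.exp p) / s)
      ((deriv f (r * Real.exp p) * (1 * Real.exp p) * r - f (r * Real.exp p) * 1) / r ^ 2) r :=
    (HasDerivAt.comp r hF ((hasDerivAt_id r).mul_const (Real.exp p))).div (hasDerivAt_id r) hr0
  simp only [classify, Hp, Hr]
  rw [h1.deriv, h2.deriv, hc₂, hc₃]
  field_simp
  ring
end
end
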